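/- Let N ≥ 2 be an integer and let A, B : Fin N → ℝ be preference vectors (nonnegative entries, each summing to 1). Let m be an index with S m = max over i of S i and suppose S m > 1. Then every joint selection probability matrix P satisfies L(P) ≥ (N / (2 * (N − 1))) * (S m − 1)². -/

import Mathlib

/-!
Off the diagonal, row `m` and column `m` of `P` do not overlap, so `π_A m + π_B m` is at most the
total mass `1`. The errors `A m - π_A m` and `B m - π_B m` therefore add up to at least `S m - 1`.
Each error vector sums to zero, so an error `x m` at `m` forces a total of `-x m` on the other
`N - 1` arms, which by Cauchy–Schwarz costs at least `x m ^ 2 / (N - 1)` more. Spreading the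
excess evenly over the two players accounts for the remaining factor `1 / 2`.
-/

section Inequalities

variable {ι κ R : Type*}

theorem row_sum_add_col_sum_le [AddCommMonoid R] [PartialOrder R] [IsOrderedAddMonoid R]
    {s : Finset ι} {t : Finset κ} {P : ι → κ → R} (hP : ∀ i ∈ s, ∀ j ∈ t, 0 ≤ P i j)
    {a : ι} (ha : a ∈ s) {b : κ} (hb : b ∈ t) :
    ∑ j ∈ t, P a j + ∑ i ∈ s, P i b ≤ ∑ i ∈ s, ∑ j ∈ t, P i j + P a b := by
  classical
  have entry_le_row : ∀ i ∈ s.erase a, P i b ≤ ∑ j ∈ t, P i j := fun i hi ↦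
    Finset.single_le_sum (hP i (Finset.mem_of_mem_erase hi)) hb
  calc ∑ j ∈ t, P a j + ∑ i ∈ s, P i b
      = ∑ j ∈ t, P a j + ∑ i ∈ s.erase a, P i b + P a b := by
        rw [← Finset.sum_erase_add s _ ha, add_assoc]
    _ ≤ ∑ j ∈ t, P a j + ∑ i ∈ s.erase a, ∑ j ∈ t, P i j + P a b := by
        gcongr with i hi
        exact entry_le_row i hi
    _ = ∑ i ∈ s, ∑ j ∈ t, P i j + P a b := by
        rw [Finset.add_sum_erase s (fun i ↦ ∑ j ∈ t, P i j) ha]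

variable [CommRing R] [LinearOrder R] [IsStrictOrderedRing R] {s : Finset ι} {x y : ι → R} {m : ι}

theorem card_mul_sq_le_card_sub_one_mul_sum_sq (hm : m ∈ s) (hx : ∑ i ∈ s, x i = 0) :
    (s.card : R) * x m ^ 2 ≤ (s.card - 1) * ∑ i ∈ s, x i ^ 2 := by
  classical
  have sum_others : ∑ i ∈ s.erase m, x i = -x m :=
    eq_neg_of_add_eq_zero_left ((Finset.sum_erase_add s x hm).trans hx)
  have cauchy_schwarz : x m ^ 2 ≤ (s.card - 1) * ∑ i ∈ s.erase m, x i ^ 2 := by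
    simpa only [sum_others, neg_sq, Finset.cast_card_erase_of_mem hm] using
      sq_sum_le_card_mul_sum_sq (s := s.erase m) (f := x)
  calc (s.card : R) * x m ^ 2
      = x m ^ 2 + (s.card - 1) * x m ^ 2 := by ring
    _ ≤ (s.card - 1) * ∑ i ∈ s.erase m, x i ^ 2 + (s.card - 1) * x m ^ 2 := by gcongr
    _ = (s.card - 1) * ∑ i ∈ s, x i ^ 2 := by rw [← mul_add, Finset.sum_erase_add s _ hm]

theorem card_mul_add_sq_le_two_mul_card_sub_one_mul (hm : m ∈ s)
    (hx : ∑ i ∈ s, x i = 0) (hy : ∑ i ∈ s, y i = 0) :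
    (s.card : R) * (x m + y m) ^ 2 ≤
      2 * (s.card - 1) * (∑ i ∈ s, x i ^ 2 + ∑ i ∈ s, y i ^ 2) :=
  calc (s.card : R) * (x m + y m) ^ 2
      ≤ s.card * (2 * (x m ^ 2 + y m ^ 2)) := by gcongr; exact add_sq_le
    _ = 2 * (s.card * x m ^ 2 + s.card * y m ^ 2) := by ring
    _ ≤ 2 * ((s.card - 1) * ∑ i ∈ s, x i ^ 2 + (s.card - 1) * ∑ i ∈ s, y i ^ 2) := by
        gcongr 2 * (?_ + ?_)
        exacts [card_mul_sq_le_card_sub_one_mul_sum_sq hm hx,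
          card_mul_sq_le_card_sub_one_mul_sum_sq hm hy]
    _ = 2 * (s.card - 1) * (∑ i ∈ s, x i ^ 2 + ∑ i ∈ s, y i ^ 2) := by ring

end Inequalities

theorem loss_lower_bound_of_popularity_gt_one_general {ι 𝕜 : Type*} [Fintype ι] [Nontrivial ι]
    [Field 𝕜] [LinearOrder 𝕜] [IsStrictOrderedRing 𝕜] {A B : ι → 𝕜} {P : ι → ι → 𝕜} {m : ι}
    (hA : ∑ i, A i = ∑ i, ∑ j, P i j) (hB : ∑ j, B j = ∑ i, ∑ j, P i j)
    (hP0 : ∀ i j, 0 ≤ P i j) (hPm : P m m = 0) (hm : ∑ i, ∑ j, P i j ≤ A m + B m) :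
    (Fintype.card ι : 𝕜) / (2 * (Fintype.card ι - 1)) * (A m + B m - ∑ i, ∑ j, P i j) ^ 2 ≤
      ∑ i, (∑ j, P i j - A i) ^ 2 + ∑ j, (∑ i, P i j - B j) ^ 2 := by
  have card_sub_one_pos : (0 : 𝕜) < Fintype.card ι - 1 :=
    sub_pos.2 (Nat.one_lt_cast.2 Fintype.one_lt_card)
  have marginals_le : ∑ j, P m j + ∑ i, P i m ≤ ∑ i, ∑ j, P i j := by
    simpa only [hPm, add_zero] using
      row_sum_add_col_sum_le (fun i _ j _ ↦ hP0 i j) (Finset.mem_univ m) (Finset.mem_univ m)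
  have excess_le :
      A m + B m - ∑ i, ∑ j, P i j ≤ (A m - ∑ j, P m j) + (B m - ∑ i, P i m) := by
    linarith
  have errorA_sum : ∑ i, (A i - ∑ j, P i j) = 0 := by
    rw [Finset.sum_sub_distrib, hA, sub_self]
  have errorB_sum : ∑ j, (B j - ∑ i, P i j) = 0 := by
    rw [Finset.sum_sub_distrib, hB, Finset.sum_comm, sub_self]
  simp only [sub_sq_comm _ (A _), sub_sq_comm _ (B _)]
  rw [div_mul_eq_mul_div, div_le_iff₀' (by positivity)]
  calc (Fintype.card ι : 𝕜) * (A m + B m - ∑ i, ∑ j, P i j) ^ 2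
      ≤ Fintype.card ι * ((A m - ∑ j, P m j) + (B m - ∑ i, P i m)) ^ 2 := by
        gcongr
    _ ≤ _ := card_mul_add_sq_le_two_mul_card_sub_one_mul (Finset.mem_univ m) errorA_sum errorB_sum

/-- Lower bound on the loss: if the maximum popularity `S m = A m + B m` exceeds 1, every
conflict-free joint selection probability matrix `P` has loss at least
`N / (2 (N − 1)) · (S m − 1)²`. -/
theorem loss_lower_bound_of_popularity_gt_one
    (N : ℕ) (hN : 2 ≤ N) (A B : Fin N → ℝ)
    (hA0 : ∀ i, 0 ≤ A i) (hB0 : ∀ i, 0 ≤ B i)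
    (hA1 : ∑ i, A i = 1) (hB1 : ∑ i, B i = 1)
    (m : Fin N) (hm : ∀ i, A i + B i ≤ A m + B m) (hSm : 1 < A m + B m)
    (P : Fin N → Fin N → ℝ)
    (hPdiag : ∀ i, P i i = 0) (hP0 : ∀ i j, 0 ≤ P i j)
    (hPsum : ∑ i, ∑ j, P i j = 1) :
    (N : ℝ) / (2 * ((N : ℝ) - 1)) * (A m + B m - 1) ^ 2 ≤
      ∑ i, ((∑ j, P i j) - A i) ^ 2 + ∑ j, ((∑ i, P i j) - B j) ^ 2 := by
  have : Nontrivial (Fin N) := Fin.nontrivial_iff_two_le.2 hN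
  simpa only [hPsum, Fintype.card_fin] using loss_lower_bound_of_popularity_gt_one_general
    (hA1.trans hPsum.symm) (hB1.trans hPsum.symm) hP0 (hPdiag m) (hPsum.trans_le hSm.le)
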